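/- Let κ > 0 and let u, v : ℝ × ℝ⁵ → ℂ be smooth functions which, together with all their derivatives, are Schwartz in the space variable locally uniformly in time, and which satisfy the system i∂ₜu + Δₓu + v·conj(u) = 0 and i∂ₜv + κΔₓv + u² = 0 on ℝ × ℝ⁵. Then the momentum t ↦ Im ∫_{ℝ⁵} ( conj(u(t,x)) ∇ₓu(t,x) + (1/2) conj(v(t,x)) ∇ₓv(t,x) ) dx ∈ ℝ⁵ is constant in t. -/

import Mathlib

open MeasureTheory Complex ComplexConjugate

noncomputable section

abbrev E5 := EuclideanSpace ℝ (Fin 5)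

/-- Spatial partial derivative of `f` at `x` in coordinate direction `i`. -/
def pd (f : E5 → ℂ) (x : E5) (i : Fin 5) : ℂ :=
  fderiv ℝ f x (EuclideanSpace.single i 1)

/-- Spatial Laplacian. -/
def lap (f : E5 → ℂ) (x : E5) : ℂ :=
  ∑ i : Fin 5, fderiv ℝ (fun y => pd f y i) x (EuclideanSpace.single i 1)

/-- `u` and all its derivatives are Schwartz in the space variable,
locally uniformly in time. -/
def SchwartzLocUnifT (u : ℝ × E5 → ℂ) : Prop :=
  ∀ (n k : ℕ) (K : Set ℝ), IsCompact K →
    ∃ C : ℝ, ∀ t ∈ K, ∀ x : E5, ‖x‖ ^ k * ‖iteratedFDeriv ℝ n u (t, x)‖ ≤ C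

/-!
Write `⟪a, b⟫ = Re (conj a * b)` for the real inner product of `ℂ`. In a direction `w`, the momentum
of `φ` is `∫ ⟪i φ, ∂_w φ⟫`, and along a curve of Schwartz functions its time derivative is
`2 ∫ ⟪i ∂ₜφ, ∂_w φ⟫`, because `i` and `∂_w` are skew and commute. If `i ∂ₜφ + κ Δφ + N = 0`, the
Laplacian contributes nothing, since `Δ` is symmetric, `∂_w` is skew and they commute; what remains
is `-2 ∫ ⟪N, ∂_w φ⟫`. For the two equations of the system these remainders add up, with weights
`1` and `1 / 2`, to `-∫ ∂_w ⟪u², v⟫ = 0`.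
-/

section SecondDerivatives

variable {E F : Type*} [NormedAddCommGroup E] [NormedSpace ℝ E]
  [NormedAddCommGroup F] [NormedSpace ℝ F] {f : E → F}

theorem fderiv_fderiv_apply_const (hf : ContDiff ℝ 2 f) (x v w : E) :
    fderiv ℝ (fun y => fderiv ℝ f y v) x w = fderiv ℝ (fderiv ℝ f) x w v := by
  have hf' : DifferentiableAt ℝ (fderiv ℝ f) x :=
    (hf.fderiv_right (m := 1) (by norm_num)).differentiable one_ne_zero x
  simp [fderiv_clm_apply hf' (differentiableAt_const v)]

theorem fderiv_fderiv_apply_comm (hf : ContDiff ℝ 2 f) (x v w : E) :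
    fderiv ℝ (fun y => fderiv ℝ f y v) x w = fderiv ℝ (fun y => fderiv ℝ f y w) x v := by
  rw [fderiv_fderiv_apply_const hf, fderiv_fderiv_apply_const hf]
  exact hf.contDiffAt.isSymmSndFDerivAt (by simp) w v

end SecondDerivatives

section SpaceTime

open SchwartzMap LineDeriv
open scoped ContDiff

variable {E F F' G : Type*} [NormedAddCommGroup E] [NormedSpace ℝ E]
  [NormedAddCommGroup F] [NormedSpace ℝ F] [NormedAddCommGroup F'] [NormedSpace ℝ F']
  [NormedAddCommGroup G] [NormedSpace ℝ G]

/-- The partial derivative in time of a function on space-time. -/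
def timeDeriv (f : ℝ × E → F) (p : ℝ × E) : F :=
  deriv (fun s => f (s, p.2)) p.1

/-- The partial derivative of a function on space-time in the space direction `w`. -/
def spaceDeriv (w : E) (f : ℝ × E → F) (p : ℝ × E) : F :=
  fderiv ℝ (fun y => f (p.1, y)) p.2 w

/-- Smooth functions on space-time which, with all their space-time derivatives, decay in space
faster than any polynomial, locally uniformly in time. The decay condition is that of
`SchwartzLocUnifT`, for an arbitrary space `E` and arbitrary values. -/
structure IsSchwartzLocUnif (f : ℝ × E → F) : Prop where
  contDiff : ContDiff ℝ ∞ f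
  decay : ∀ (n k : ℕ) (K : Set ℝ), IsCompact K →
    ∃ C : ℝ, ∀ t ∈ K, ∀ x : E, ‖x‖ ^ k * ‖iteratedFDeriv ℝ n f (t, x)‖ ≤ C

theorem hasDerivAt_slice_time {f : ℝ × E → F} {t : ℝ} {x : E}
    (hf : DifferentiableAt ℝ f (t, x)) :
    HasDerivAt (fun s => f (s, x)) (fderiv ℝ f (t, x) (1, 0)) t :=
  hf.hasFDerivAt.comp_hasDerivAt t ((hasDerivAt_id t).prodMk (hasDerivAt_const t x))

theorem timeDeriv_eq_fderiv {f : ℝ × E → F} (hf : Differentiable ℝ f) :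
    timeDeriv f = fun p => fderiv ℝ f p (1, 0) :=
  funext fun p => (hasDerivAt_slice_time (hf p)).deriv

theorem spaceDeriv_eq_fderiv {f : ℝ × E → F} (hf : Differentiable ℝ f) (w : E) :
    spaceDeriv w f = fun p => fderiv ℝ f p (0, w) := by
  funext p
  have h : HasFDerivAt (fun y => f (p.1, y))
      ((fderiv ℝ f p).comp (ContinuousLinearMap.inr ℝ ℝ E)) p.2 :=
    (hf p).hasFDerivAt.comp p.2 (hasFDerivAt_prodMk_right p.1 p.2)
  simp [spaceDeriv, h.fderiv]

theorem timeDeriv_bilin {f : ℝ × E → F} {g : ℝ × E → F'} (hf : Differentiable ℝ f)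
    (hg : Differentiable ℝ g) (B : F →L[ℝ] F' →L[ℝ] G) (p : ℝ × E) :
    timeDeriv (fun q => B (f q) (g q)) p = B (f p) (timeDeriv g p) + B (timeDeriv f p) (g p) := by
  have hB : Differentiable ℝ fun q => B (f q) (g q) := by fun_prop
  simp [timeDeriv_eq_fderiv, hf, hg, hB, B.fderiv_of_bilinear (hf p) (hg p)]

theorem timeDeriv_spaceDeriv_comm {f : ℝ × E → F} (hf : ContDiff ℝ 2 f) (w : E) :
    timeDeriv (spaceDeriv w f) = spaceDeriv w (timeDeriv f) := by
  have hf' (v : ℝ × E) : Differentiable ℝ fun p => fderiv ℝ f p v :=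
    ((hf.fderiv_right (m := 1) (by norm_num)).clm_apply contDiff_const).differentiable one_ne_zero
  have hfd : Differentiable ℝ f := hf.differentiable two_ne_zero
  rw [spaceDeriv_eq_fderiv hfd, timeDeriv_eq_fderiv hfd, timeDeriv_eq_fderiv (hf' _),
    spaceDeriv_eq_fderiv (hf' _)]
  exact funext fun p => fderiv_fderiv_apply_comm hf p _ _

theorem norm_iteratedFDeriv_slice_le {f : ℝ × E → F} {n : ℕ} (hf : ContDiff ℝ n f) (t : ℝ)
    (x : E) :
    ‖iteratedFDeriv ℝ n (fun y => f (t, y)) x‖ ≤ ‖iteratedFDeriv ℝ n f (t, x)‖ := by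
  have hshift : ContDiff ℝ n fun p => f ((t, 0) + p) := hf.comp (by fun_prop)
  have hslice : (fun y => f (t, y)) =
      (fun p => f ((t, 0) + p)) ∘ ContinuousLinearMap.inr ℝ ℝ E := by
    ext y; simp
  rw [hslice, ContinuousLinearMap.iteratedFDeriv_comp_right _ hshift x le_rfl,
    iteratedFDeriv_comp_add_left]
  refine (ContinuousMultilinearMap.norm_compContinuousLinearMap_le _ _).trans ?_
  simpa using mul_le_of_le_one_right (norm_nonneg (iteratedFDeriv ℝ n f (t, x)))
    (pow_le_one₀ (norm_nonneg _) (ContinuousLinearMap.norm_inr_le_one ℝ ℝ E))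

namespace IsSchwartzLocUnif

variable {f : ℝ × E → F} {g : ℝ × E → F'}

theorem differentiable (hf : IsSchwartzLocUnif f) : Differentiable ℝ f :=
  hf.contDiff.differentiable (by simp)

theorem fderiv_apply_const (hf : IsSchwartzLocUnif f) (w : ℝ × E) :
    IsSchwartzLocUnif fun p => fderiv ℝ f p w := by
  have hf' : ContDiff ℝ ∞ (fderiv ℝ f) := hf.contDiff.fderiv_right (by simp)
  refine ⟨hf'.clm_apply contDiff_const, fun n k K hK => ?_⟩
  obtain ⟨C, hC⟩ := hf.decay (n + 1) k K hK
  refine ⟨‖w‖ * C, fun t ht x => ?_⟩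
  calc ‖x‖ ^ k * ‖iteratedFDeriv ℝ n (fun p => fderiv ℝ f p w) (t, x)‖
      ≤ ‖x‖ ^ k * (‖w‖ * ‖iteratedFDeriv ℝ n (fderiv ℝ f) (t, x)‖) := by
        gcongr
        exact norm_iteratedFDeriv_clm_apply_const hf'.contDiffAt (mod_cast le_top)
    _ = ‖w‖ * (‖x‖ ^ k * ‖iteratedFDeriv ℝ (n + 1) f (t, x)‖) := by
        rw [norm_iteratedFDeriv_fderiv, mul_left_comm]
    _ ≤ ‖w‖ * C := by gcongr; exact hC t ht x

protected theorem timeDeriv (hf : IsSchwartzLocUnif f) : IsSchwartzLocUnif (timeDeriv f) :=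
  timeDeriv_eq_fderiv hf.differentiable ▸ hf.fderiv_apply_const (1, 0)

protected theorem spaceDeriv (hf : IsSchwartzLocUnif f) (w : E) :
    IsSchwartzLocUnif (spaceDeriv w f) :=
  spaceDeriv_eq_fderiv hf.differentiable w ▸ hf.fderiv_apply_const (0, w)

theorem bilin (hf : IsSchwartzLocUnif f) (hg : IsSchwartzLocUnif g) (B : F →L[ℝ] F' →L[ℝ] G) :
    IsSchwartzLocUnif fun p => B (f p) (g p) := by
  refine ⟨B.isBoundedBilinearMap.contDiff.comp (hf.contDiff.prodMk hg.contDiff),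
    fun n k K hK => ?_⟩
  choose A hA using fun m => hf.decay m 0 K hK
  choose A' hA' using fun m => hg.decay m k K hK
  refine ⟨‖B‖ * ∑ i ∈ Finset.range (n + 1), n.choose i * A i * A' (n - i), fun t ht x => ?_⟩
  calc ‖x‖ ^ k * ‖iteratedFDeriv ℝ n (fun p => B (f p) (g p)) (t, x)‖
      ≤ ‖x‖ ^ k * (‖B‖ * ∑ i ∈ Finset.range (n + 1), n.choose i *
          ‖iteratedFDeriv ℝ i f (t, x)‖ * ‖iteratedFDeriv ℝ (n - i) g (t, x)‖) := by
        gcongr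
        exact B.norm_iteratedFDeriv_le_of_bilinear hf.contDiff hg.contDiff _ (mod_cast le_top)
    _ = ‖B‖ * ∑ i ∈ Finset.range (n + 1), n.choose i * ‖iteratedFDeriv ℝ i f (t, x)‖ *
          (‖x‖ ^ k * ‖iteratedFDeriv ℝ (n - i) g (t, x)‖) := by
        rw [mul_left_comm, Finset.mul_sum]
        simp only [mul_left_comm]
    _ ≤ ‖B‖ * ∑ i ∈ Finset.range (n + 1), n.choose i * A i * A' (n - i) := by
        gcongr with i
        · have hAi : 0 ≤ A i :=
            (norm_nonneg (iteratedFDeriv ℝ i f (t, x))).trans (by simpa using hA i t ht x)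
          positivity
        · simpa using hA i t ht x
        · exact hA' (n - i) t ht x

/-- The Schwartz function `x ↦ f (t, x)`. -/
def slice (hf : IsSchwartzLocUnif f) (t : ℝ) : 𝓢(E, F) where
  toFun x := f (t, x)
  smooth' := hf.contDiff.comp (contDiff_prodMk_right t)
  decay' k n := by
    obtain ⟨C, hC⟩ := hf.decay n k {t} isCompact_singleton
    refine ⟨C, fun x => le_trans ?_ (hC t rfl x)⟩
    gcongr
    exact norm_iteratedFDeriv_slice_le (contDiff_infty.1 hf.contDiff n) t x

theorem exists_norm_le_rpow (hf : IsSchwartzLocUnif f) (l : ℕ) {K : Set ℝ} (hK : IsCompact K) :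
    ∃ C : ℝ, ∀ t ∈ K, ∀ x, ‖f (t, x)‖ ≤ C * (1 + ‖x‖) ^ (-l : ℝ) := by
  obtain ⟨A, hA⟩ := hf.decay 0 0 K hK
  obtain ⟨B, hB⟩ := hf.decay 0 l K hK
  refine ⟨2 ^ l * (A + B), fun t ht x => ?_⟩
  simpa using pow_mul_le_of_le_of_pow_mul_le (k := 0) (norm_nonneg x) (norm_nonneg (f (t, x)))
    (by simpa using hA t ht x) (by simpa using hB t ht x)

variable [MeasurableSpace E] [BorelSpace E] [SecondCountableTopology E] {μ : Measure E}
  [μ.HasTemperateGrowth]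

theorem hasDerivAt_integral (hf : IsSchwartzLocUnif f) (t : ℝ) :
    HasDerivAt (fun s => ∫ x, f (s, x) ∂μ) (∫ x, timeDeriv f (t, x) ∂μ) t := by
  obtain ⟨C, hC⟩ := hf.timeDeriv.exists_norm_le_rpow μ.integrablePower
    (isCompact_closedBall t 1)
  refine (hasDerivAt_integral_of_dominated_loc_of_deriv_le (F := fun s x => f (s, x))
    (F' := fun s x => timeDeriv f (s, x)) (Metric.closedBall_mem_nhds t one_pos)
    (.of_forall fun s => (hf.slice s).continuous.aestronglyMeasurable) (hf.slice t).integrable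
    (hf.timeDeriv.slice t).continuous.aestronglyMeasurable
    (.of_forall fun x s hs => hC s hs x) (μ.integrable_pow_neg_integrablePower.const_mul C)
    (.of_forall fun x s _ => ?_)).2
  exact (hasDerivAt_slice_time (hf.differentiable _)).differentiableAt.hasDerivAt

theorem hasDerivAt_integral_bilin (hf : IsSchwartzLocUnif f) (hg : IsSchwartzLocUnif g)
    (B : F →L[ℝ] F' →L[ℝ] G) (t : ℝ) :
    HasDerivAt (fun s => ∫ x, B (f (s, x)) (g (s, x)) ∂μ)
      ((∫ x, B (f (t, x)) (timeDeriv g (t, x)) ∂μ) +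
        ∫ x, B (timeDeriv f (t, x)) (g (t, x)) ∂μ) t := by
  have hfg' : Integrable (fun x => B (f (t, x)) (timeDeriv g (t, x))) μ :=
    ((hf.bilin hg.timeDeriv B).slice t).integrable
  have hf'g : Integrable (fun x => B (timeDeriv f (t, x)) (g (t, x))) μ :=
    ((hf.timeDeriv.bilin hg B).slice t).integrable
  rw [← integral_add hfg' hf'g]
  simpa only [timeDeriv_bilin hf.differentiable hg.differentiable]
    using (hf.bilin hg B).hasDerivAt_integral t

end IsSchwartzLocUnif

end SpaceTime

section IntegrationByParts

open SchwartzMap LineDeriv Laplacian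
open scoped RealInnerProductSpace

variable {E F H : Type*} [NormedAddCommGroup F] [NormedSpace ℝ F]
  [NormedAddCommGroup H] [InnerProductSpace ℝ H] [NormedAddCommGroup E]

theorem lineDerivOp_lineDerivOp_comm [NormedSpace ℝ E] (φ : 𝓢(E, F)) (v w : E) :
    ∂_{v} (∂_{w} φ) = ∂_{w} (∂_{v} φ) := by
  ext x
  exact fderiv_fderiv_apply_comm (φ.smooth 2) x w v

variable [InnerProductSpace ℝ E] [FiniteDimensional ℝ E]

theorem laplacian_lineDerivOp_comm (φ : 𝓢(E, F)) (w : E) : Δ (∂_{w} φ) = ∂_{w} (Δ φ) := by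
  simp only [SchwartzMap.laplacian_eq_sum (stdOrthonormalBasis ℝ E), lineDerivOp_sum,
    lineDerivOp_lineDerivOp_comm _ _ w]

variable [MeasurableSpace E] [BorelSpace E] {μ : Measure E} [μ.IsAddHaarMeasure]

theorem integral_inner_laplacian_lineDerivOp_eq_zero (φ : 𝓢(E, H)) (w : E) :
    ∫ x, ⟪Δ φ x, ∂_{w} φ x⟫ ∂μ = 0 := by
  have h : ∫ x, ⟪Δ φ x, ∂_{w} φ x⟫ ∂μ = -∫ x, ⟪Δ φ x, ∂_{w} φ x⟫ ∂μ := calc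
    ∫ x, ⟪Δ φ x, ∂_{w} φ x⟫ ∂μ
      = ∫ x, ⟪φ x, Δ (∂_{w} φ) x⟫ ∂μ :=
        (integral_bilinear_laplacian_right_eq_left φ (∂_{w} φ) (innerSL ℝ)).symm
    _ = ∫ x, ⟪φ x, ∂_{w} (Δ φ) x⟫ ∂μ := by rw [laplacian_lineDerivOp_comm]
    _ = -∫ x, ⟪∂_{w} φ x, Δ φ x⟫ ∂μ :=
        integral_bilinear_lineDerivOp_right_eq_neg_left φ (Δ φ) (innerSL ℝ) w
    _ = -∫ x, ⟪Δ φ x, ∂_{w} φ x⟫ ∂μ := by simp only [real_inner_comm]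
  linarith

end IntegrationByParts

section Momentum

open SchwartzMap LineDeriv Laplacian
open scoped RealInnerProductSpace

/-- The real bilinear form `(a, b) ↦ ⟪i a, b⟫ = Im (conj a * b)` on `ℂ`. -/
def innerI : ℂ →L[ℝ] ℂ →L[ℝ] ℝ :=
  (innerSL ℝ : ℂ →L[ℝ] ℂ →L[ℝ] ℝ).comp (ContinuousLinearMap.mul ℝ ℂ I)

theorem innerI_apply (a b : ℂ) : innerI a b = ⟪I * a, b⟫ := rfl

theorem innerI_eq_im (a b : ℂ) : innerI a b = (conj a * b).im := by
  rw [innerI_apply, Complex.inner, map_mul, conj_I, neg_mul, mul_neg, mul_left_comm, neg_re,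
    I_mul_re, neg_neg, mul_comm]

theorem innerI_swap (a b : ℂ) : innerI a b = -innerI b a := by
  simp only [innerI_eq_im, mul_im, conj_re, conj_im]
  ring

variable {E : Type*} [NormedAddCommGroup E] [InnerProductSpace ℝ E] [FiniteDimensional ℝ E]
  [MeasurableSpace E] [BorelSpace E]

/-- The component in direction `w` of the momentum `Im ∫ conj φ ∇φ`. -/
def momentum (φ : 𝓢(E, ℂ)) (w : E) : ℝ :=
  ∫ x, innerI (φ x) (∂_{w} φ x)

theorem integrable_conj_mul_lineDerivOp (φ : 𝓢(E, ℂ)) (w : E) :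
    Integrable fun x => conj (φ x) * ∂_{w} φ x :=
  (pairing ((ContinuousLinearMap.mul ℝ ℂ).comp (conjCLE : ℂ →L[ℝ] ℂ)) φ (∂_{w} φ)).integrable

theorem im_integral_conj_mul_lineDerivOp (φ : 𝓢(E, ℂ)) (w : E) :
    (∫ x, conj (φ x) * ∂_{w} φ x).im = momentum φ w := by
  simp only [momentum, innerI_eq_im]
  exact (imCLM.integral_comp_comm (integrable_conj_mul_lineDerivOp φ w)).symm

theorem im_integral_add_half_eq_momentum (φ ψ : 𝓢(E, ℂ)) (w : E) :
    (∫ x, (conj (φ x) * ∂_{w} φ x + (1 / 2 : ℂ) * conj (ψ x) * ∂_{w} ψ x)).im =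
      momentum φ w + 1 / 2 * momentum ψ w := by
  simp only [mul_assoc]
  rw [integral_add (integrable_conj_mul_lineDerivOp φ w)
      ((integrable_conj_mul_lineDerivOp ψ w).const_mul _), integral_const_mul, add_im,
    ← im_integral_conj_mul_lineDerivOp, ← im_integral_conj_mul_lineDerivOp]
  simp

theorem integral_innerI_lineDerivOp_comm (φ ψ : 𝓢(E, ℂ)) (w : E) :
    ∫ x, innerI (φ x) (∂_{w} ψ x) = ∫ x, innerI (ψ x) (∂_{w} φ x) := by
  rw [integral_bilinear_lineDerivOp_right_eq_neg_left, ← integral_neg]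
  simp only [← innerI_swap]

theorem integral_inner_sq_lineDerivOp (φ ψ : 𝓢(E, ℂ)) (w : E) :
    ∫ x, ⟪φ x ^ 2, ∂_{w} ψ x⟫ = -(2 * ∫ x, ⟪ψ x * conj (φ x), ∂_{w} φ x⟫) := by
  have hderiv (x : E) : ∂_{w} (pairing (ContinuousLinearMap.mul ℝ ℂ) φ φ) x =
      2 * φ x * ∂_{w} φ x := by
    rw [lineDerivOp_apply_eq_fderiv, lineDerivOp_apply_eq_fderiv]
    have hmul : ⇑(pairing (ContinuousLinearMap.mul ℝ ℂ) φ φ) = fun y => φ y * φ y := rfl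
    rw [hmul, fderiv_fun_mul φ.differentiableAt φ.differentiableAt]
    simp only [add_apply, smul_apply, smul_eq_mul]
    ring
  calc ∫ x, ⟪φ x ^ 2, ∂_{w} ψ x⟫
      = ∫ x, ⟪pairing (ContinuousLinearMap.mul ℝ ℂ) φ φ x, ∂_{w} ψ x⟫ := by
        simp [sq]
    _ = -∫ x, ⟪2 * φ x * ∂_{w} φ x, ψ x⟫ := by
        simp only [← hderiv]
        exact integral_bilinear_lineDerivOp_right_eq_neg_left _ ψ (innerSL ℝ) w
    _ = -(2 * ∫ x, ⟪ψ x * conj (φ x), ∂_{w} φ x⟫) := by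
        rw [← integral_const_mul]
        congr! 3
        simp only [Complex.inner, map_mul, map_ofNat, conj_conj, mul_re, mul_im, conj_re, conj_im,
          re_ofNat, im_ofNat]
        ring

namespace IsSchwartzLocUnif

variable {f : ℝ × E → ℂ}

theorem hasDerivAt_momentum (hf : IsSchwartzLocUnif f) (w : E) (t : ℝ) :
    HasDerivAt (fun s => momentum (hf.slice s) w)
      (2 * ∫ x, innerI (timeDeriv f (t, x)) (∂_{w} (hf.slice t) x)) t := by
  have hswap : ∫ x, innerI (f (t, x)) (spaceDeriv w (timeDeriv f) (t, x)) =
      ∫ x, innerI (timeDeriv f (t, x)) (spaceDeriv w f (t, x)) :=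
    integral_innerI_lineDerivOp_comm (hf.slice t) (hf.timeDeriv.slice t) w
  have h := hf.hasDerivAt_integral_bilin (hf.spaceDeriv w) innerI (μ := volume) t
  rw [timeDeriv_spaceDeriv_comm (contDiff_infty.1 hf.contDiff 2), hswap, ← two_mul] at h
  exact h

theorem hasDerivAt_momentum_of_schrodinger (hf : IsSchwartzLocUnif f) {κ t : ℝ} {N : E → ℂ}
    (heq : ∀ x, I * timeDeriv f (t, x) + κ * Δ (fun y => f (t, y)) x + N x = 0) (w : E) :
    HasDerivAt (fun s => momentum (hf.slice s) w)
      (-(2 * ∫ x, ⟪N x, ∂_{w} (hf.slice t) x⟫)) t := by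
  let φ := hf.slice t
  have hN (x : E) : N x = -(I * timeDeriv f (t, x)) - κ • Δ φ x := by
    have hlap : Δ φ x = Δ (fun y => f (t, y)) x := SchwartzMap.laplacian_apply φ x
    rw [hlap, real_smul]
    linear_combination heq x
  have hint : Integrable fun x => -innerI (timeDeriv f (t, x)) (∂_{w} φ x) :=
    (pairing innerI (hf.timeDeriv.slice t) (∂_{w} φ)).integrable.neg
  have hint' : Integrable fun x => ⟪Δ φ x, ∂_{w} φ x⟫ :=
    (pairing (innerSL ℝ) (Δ φ) (∂_{w} φ)).integrable
  have hforce : ∫ x, ⟪N x, ∂_{w} φ x⟫ =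
      -∫ x, innerI (timeDeriv f (t, x)) (∂_{w} φ x) := by
    simp only [hN, inner_sub_left, inner_neg_left, real_inner_smul_left, ← innerI_apply]
    rw [integral_sub hint (hint'.const_mul κ), integral_neg, integral_const_mul,
      integral_inner_laplacian_lineDerivOp_eq_zero, mul_zero, sub_zero]
  rw [hforce, mul_neg, neg_neg]
  exact hf.hasDerivAt_momentum w t

end IsSchwartzLocUnif

theorem momentum_conservation_general (κ : ℝ) {u v : ℝ × E → ℂ}
    (hu : IsSchwartzLocUnif u) (hv : IsSchwartzLocUnif v)
    (heq₁ : ∀ (t : ℝ) (x : E),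
      I * timeDeriv u (t, x) + Δ (fun y => u (t, y)) x + v (t, x) * conj (u (t, x)) = 0)
    (heq₂ : ∀ (t : ℝ) (x : E),
      I * timeDeriv v (t, x) + (κ : ℂ) * Δ (fun y => v (t, y)) x + u (t, x) ^ 2 = 0)
    (t₁ t₂ : ℝ) (w : E) :
    (∫ x, (conj (u (t₁, x)) * spaceDeriv w u (t₁, x) +
        (1 / 2 : ℂ) * conj (v (t₁, x)) * spaceDeriv w v (t₁, x))).im =
      (∫ x, (conj (u (t₂, x)) * spaceDeriv w u (t₂, x) +
        (1 / 2 : ℂ) * conj (v (t₂, x)) * spaceDeriv w v (t₂, x))).im := by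
  have hconst (t : ℝ) :
      HasDerivAt (fun s => momentum (hu.slice s) w + 1 / 2 * momentum (hv.slice s) w) 0 t := by
    have hu' := hu.hasDerivAt_momentum_of_schrodinger (κ := 1) (t := t)
      (N := fun x => v (t, x) * conj (u (t, x))) (by simpa using heq₁ t) w
    have hv' := hv.hasDerivAt_momentum_of_schrodinger (heq₂ t) w
    have hcancel : ∫ x, ⟪u (t, x) ^ 2, ∂_{w} (hv.slice t) x⟫ =
        -(2 * ∫ x, ⟪v (t, x) * conj (u (t, x)), ∂_{w} (hu.slice t) x⟫) :=
      integral_inner_sq_lineDerivOp (hu.slice t) (hv.slice t) w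
    refine (hu'.add (hv'.const_mul (1 / 2))).congr_deriv ?_
    rw [hcancel]
    ring
  calc _ = momentum (hu.slice t₁) w + 1 / 2 * momentum (hv.slice t₁) w :=
        im_integral_add_half_eq_momentum (hu.slice t₁) (hv.slice t₁) w
    _ = momentum (hu.slice t₂) w + 1 / 2 * momentum (hv.slice t₂) w :=
        is_const_of_deriv_eq_zero (fun t => (hconst t).differentiableAt)
          (fun t => (hconst t).deriv) t₁ t₂
    _ = _ := (im_integral_add_half_eq_momentum (hu.slice t₂) (hv.slice t₂) w).symm

end Momentum

theorem lap_eq_laplacian {f : E5 → ℂ} (hf : ContDiff ℝ 2 f) : lap f = Laplacian.laplacian f := by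
  ext x
  simp [InnerProductSpace.laplacian_eq_iteratedFDeriv_orthonormalBasis f
      (EuclideanSpace.basisFun (Fin 5) ℝ), lap, pd, iteratedFDeriv_two_apply,
    fderiv_fderiv_apply_const hf]

theorem momentum_conservation (κ : ℝ) (hκ : 0 < κ) (u v : ℝ × E5 → ℂ)
    (hu : ContDiff ℝ (⊤ : ℕ∞) u) (hv : ContDiff ℝ (⊤ : ℕ∞) v)
    (hus : SchwartzLocUnifT u) (hvs : SchwartzLocUnifT v)
    (heq1 : ∀ (t : ℝ) (x : E5),
      I * deriv (fun s => u (s, x)) t + lap (fun y => u (t, y)) x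
        + v (t, x) * conj (u (t, x)) = 0)
    (heq2 : ∀ (t : ℝ) (x : E5),
      I * deriv (fun s => v (s, x)) t + (κ : ℂ) * lap (fun y => v (t, y)) x
        + (u (t, x)) ^ 2 = 0) :
    ∀ (t₁ t₂ : ℝ) (i : Fin 5),
      (∫ x : E5, (conj (u (t₁, x)) * pd (fun y => u (t₁, y)) x i
          + (1 / 2 : ℂ) * conj (v (t₁, x)) * pd (fun y => v (t₁, y)) x i)).im
        = (∫ x : E5, (conj (u (t₂, x)) * pd (fun y => u (t₂, y)) x i
          + (1 / 2 : ℂ) * conj (v (t₂, x)) * pd (fun y => v (t₂, y)) x i)).im := by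
  intro t₁ t₂ i
  have hlap {f : ℝ × E5 → ℂ} (hf : ContDiff ℝ (⊤ : ℕ∞) f) (t : ℝ) :
      lap (fun y => f (t, y)) = Laplacian.laplacian fun y => f (t, y) :=
    lap_eq_laplacian (contDiff_infty.1 (hf.comp (contDiff_prodMk_right t)) 2)
  simp only [hlap hu, hlap hv] at heq1 heq2
  exact momentum_conservation_general κ ⟨hu, hus⟩ ⟨hv, hvs⟩ heq1 heq2 t₁ t₂
    (EuclideanSpace.single i 1)
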